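/- Let $A$ be a bialgebra over a commutative ring $k$, with multiplication $m$, comultiplication $\Delta(a)=a_{(1)}\otimes a_{(2)}$ and counit $\varepsilon$, and let $r:A\times A\to k$ be a $k$-bilinear map satisfying $$r(ab,c)=r(a,c_{(1)})\,r(b,c_{(2)}),\qquad r(a,bc)=r(a_{(1)},c)\,r(a_{(2)},b)\qquad\text{for all } a,b,c\in A.$$ Call a pair $(a,b)$ of elements of $A$ *$r$-commuting* if $r(a_{(1)},b_{(1)})\,a_{(2)}b_{(2)}=r(a_{(2)},b_{(2)})\,b_{(1)}a_{(1)}$ in $A$. Call a $k$-submodule $C\subseteq A$ a *subcoalgebra* if $\Delta(C)$ is contained in the image of $C\otimes C$ in $A\otimes A$. Then: (i) Let $C\subseteq A$ be a subcoalgebra and $a,b\in A$. If $(a,c)$ and $(b,c)$ are $r$-commuting for all $c\in C$, then $(ab,c)$ is $r$-commuting for all $c\in C$. (ii) Let $C\subseteq A$ be a subcoalgebra and $b,c\in A$. If $(a,b)$ and $(a,c)$ are $r$-commuting for all $a\in C$, then $(a,bc)$ is $r$-commuting for all $a\in C$. (iii) Consequently, let $S\subseteq A$ generate $A$ as a $k$-algebra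 and suppose that the $k$-span of $S\cup\{1\}$ is a subcoalgebra. If $(s,t)$ is $r$-commuting for all $s,t\in S\cup\{1\}$, then every pair of elements of $A$ is $r$-commuting. If moreover $r$ has a two-sided convolution inverse $\bar r$ (that is, $r*\bar r=\bar r*r=\varepsilon\otimes\varepsilon$ in $\mathrm{Hom}_k(A\otimes A,k)$), then the following are equivalent: (1) the commutation law $m^{\mathrm{op}}=r*m*\bar r$ holds in $\mathrm{Hom}_k(A\otimes A,A)$, where $m^{\mathrm{op}}(a\otimes b)=ba$; (2) every pair of elements of $A$ is $r$-commuting; (3) $(s,t)$ is $r$-commuting for all $s,t\in S$; (4) $m^{\mathrm{op}}(s\otimes t)=(r*m*\bar r)(s\otimes t)$ for all $s,t\in S$. -/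

import Mathlib

open TensorProduct WithConv

/-- The pair `(a, b)` is `r`-commuting:
`Σ r(a₍₁₎, b₍₁₎)·a₍₂₎b₍₂₎ = Σ r(a₍₂₎, b₍₂₎)·b₍₁₎a₍₁₎`. -/
noncomputable def rComm {k A : Type*} [CommRing k] [Ring A] [Bialgebra k A]
    (r : A →ₗ[k] A →ₗ[k] k) (a b : A) : Prop :=
  (TensorProduct.lid k A)
      ((TensorProduct.map (TensorProduct.lift r) (LinearMap.mul' k A))
        ((TensorProduct.tensorTensorTensorComm k A A A A)
          ((Coalgebra.comul (R := k) a) ⊗ₜ[k] (Coalgebra.comul (R := k) b)))) =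
  (TensorProduct.rid k A)
      ((TensorProduct.map ((LinearMap.mul' k A) ∘ₗ (TensorProduct.comm k A A).toLinearMap)
          (TensorProduct.lift r))
        ((TensorProduct.tensorTensorTensorComm k A A A A)
          ((Coalgebra.comul (R := k) a) ⊗ₜ[k] (Coalgebra.comul (R := k) b))))

/-- A `k`-submodule `C` of a coalgebra `A` is a subcoalgebra if `Δ(C)` lies in the image of
`C ⊗ C` in `A ⊗ A`. -/
def IsSubcoalgebra {k A : Type*} [CommRing k] [AddCommGroup A] [Module k A] [Coalgebra k A]
    (C : Submodule k A) : Prop :=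
  ∀ c ∈ C, Coalgebra.comul (R := k) c ∈
    LinearMap.range (TensorProduct.map C.subtype C.subtype)

/-- A bilinear form `s` on `A`, seen as the linear map `A ⊗ A → A`, `a ⊗ b ↦ s(a, b)·1`, in the
convolution algebra `Hom(A ⊗ A, A)`. -/
noncomputable def formToAlg {k A : Type*} [CommRing k] [Ring A] [Bialgebra k A]
    (s : A →ₗ[k] A →ₗ[k] k) : WithConv (A ⊗[k] A →ₗ[k] A) :=
  toConv (Algebra.linearMap k A ∘ₗ TensorProduct.lift s)

/-- The multiplication `m : a ⊗ b ↦ ab` in the convolution algebra `Hom(A ⊗ A, A)`. -/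
noncomputable def mulMap (k A : Type*) [CommRing k] [Ring A] [Bialgebra k A] :
    WithConv (A ⊗[k] A →ₗ[k] A) :=
  toConv (LinearMap.mul' k A)

/-- The opposite multiplication `m^op : a ⊗ b ↦ ba` in the convolution algebra
`Hom(A ⊗ A, A)`. -/
noncomputable def mulOpMap (k A : Type*) [CommRing k] [Ring A] [Bialgebra k A] :
    WithConv (A ⊗[k] A →ₗ[k] A) :=
  toConv (LinearMap.mul' k A ∘ₗ (TensorProduct.comm k A A).toLinearMap)

/-- `rbar` is a two-sided inverse of `r` in the convolution algebra `Hom(A ⊗ A, k)`, whose unit is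
`ε ⊗ ε`. -/
def IsConvInverse {k A : Type*} [CommRing k] [Ring A] [Bialgebra k A]
    (r rbar : A →ₗ[k] A →ₗ[k] k) : Prop :=
  toConv (TensorProduct.lift r) * toConv (TensorProduct.lift rbar) = 1 ∧
  toConv (TensorProduct.lift rbar) * toConv (TensorProduct.lift r) = 1

/-!
As a function of `c`, the condition that `(a, c)` is `r`-commuting is an identity
`F a * id = id * G a` in the convolution algebra `Hom(A, A)`, where `F` and `G` are multiplicative
because `r` is multiplicative in its first argument. Multiplying two such identities gives (i):
convolution products of maps that agree on a subcoalgebra agree there. Part (ii) is the same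
argument with the opposite bialgebra in place of `A`. For (iii), if `r` is invertible, so are the
idempotents `r(1, ·)` and `r(·, 1)`, which are therefore equal to `ε`; hence pairs involving `1` are
`r`-commuting. Finally, on the image of `C ⊗ D` for subcoalgebras `C` and `D`, the identities
`m^op = r * m * r̄` and `r * m = m^op * r` are equivalent.
-/

open Coalgebra MulOpposite

section Precomposition

variable {k M N : Type*} (E : Type*) [CommSemiring k] [AddCommMonoid M] [Module k M]
  [Coalgebra k M] [AddCommMonoid N] [Module k N] [Coalgebra k N] [Semiring E] [Algebra k E]

/-- Precomposition with a coalgebra homomorphism, as a homomorphism of convolution monoids. -/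
def convPrecomp (φ : M →ₗc[k] N) : WithConv (N →ₗ[k] E) →* WithConv (M →ₗ[k] E) where
  toFun f := toConv (f.ofConv ∘ₗ φ.toLinearMap)
  map_one' := by ext; simp
  map_mul' f g := congrArg toConv (LinearMap.convMul_comp_coalgHom_distrib f g φ)

end Precomposition

section Subcoalgebra

variable {k M N E : Type*} [CommRing k] [AddCommGroup M] [Module k M] [Coalgebra k M]
  [AddCommGroup N] [Module k N] [Coalgebra k N] [Ring E] [Algebra k E]

theorem isSubcoalgebra_top : IsSubcoalgebra (⊤ : Submodule k M) := fun _ _ ↦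
  TensorProduct.map_surjective (fun x ↦ ⟨⟨x, trivial⟩, rfl⟩) (fun x ↦ ⟨⟨x, trivial⟩, rfl⟩) _

theorem isSubcoalgebra_span_singleton {g : M} (hg : IsGroupLikeElem k g) :
    IsSubcoalgebra (Submodule.span k {g}) := by
  intro c hc
  obtain ⟨t, rfl⟩ := Submodule.mem_span_singleton.mp hc
  let g' : Submodule.span k {g} := ⟨g, Submodule.mem_span_singleton_self g⟩
  exact ⟨t • g' ⊗ₜ g', by simp [g', hg.comul_eq_tmul_self]⟩

namespace IsSubcoalgebra

variable {C : Submodule k M} {D : Submodule k N}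

theorem range_mapIncl (hC : IsSubcoalgebra C) (hD : IsSubcoalgebra D) :
    IsSubcoalgebra (LinearMap.range (mapIncl C D)) := by
  rintro _ ⟨z, rfl⟩
  induction z with
  | zero => simp
  | add x y hx hy => rw [map_add, map_add]; exact add_mem hx hy
  | tmul c d =>
    obtain ⟨u, hu⟩ := hC c c.2
    obtain ⟨v, hv⟩ := hD d d.2
    refine ⟨map (mapIncl C D).rangeRestrict (mapIncl C D).rangeRestrict
      (tensorTensorTensorComm k C C D D (u ⊗ₜ v)), ?_⟩
    have hcomm := LinearMap.congr_fun
      (tensorTensorTensorComm_comp_map k C.subtype C.subtype D.subtype D.subtype) (u ⊗ₜ v)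
    simp only [LinearMap.comp_apply, LinearEquiv.coe_coe, map_tmul, hu, hv] at hcomm
    rw [TensorProduct.map_map]
    exact hcomm.symm

variable {f f' g g' u v : WithConv (M →ₗ[k] E)}

theorem eqOn_convMul (hC : IsSubcoalgebra C) (hf : Set.EqOn f f' C) (hg : Set.EqOn g g' C) :
    Set.EqOn (f * g : WithConv (M →ₗ[k] E)) (f' * g' : WithConv (M →ₗ[k] E)) C := by
  intro c hc
  obtain ⟨x, hx⟩ := hC c hc
  have hf' : f.ofConv ∘ₗ C.subtype = f'.ofConv ∘ₗ C.subtype := LinearMap.ext fun x ↦ hf x.2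
  have hg' : g.ofConv ∘ₗ C.subtype = g'.ofConv ∘ₗ C.subtype := LinearMap.ext fun x ↦ hg x.2
  rw [LinearMap.convMul_apply, LinearMap.convMul_apply, ← hx, TensorProduct.map_map,
    TensorProduct.map_map, hf', hg']

theorem eqOn_conj_iff (hC : IsSubcoalgebra C) (huv : u * v = 1) (hvu : v * u = 1) :
    Set.EqOn g (u * f * v : WithConv (M →ₗ[k] E)) C ↔
      Set.EqOn (u * f : WithConv (M →ₗ[k] E)) (g * u : WithConv (M →ₗ[k] E)) C := by
  constructor <;> intro h
  · have hmul_u := hC.eqOn_convMul h (Set.eqOn_refl u C)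
    rw [mul_assoc _ v, hvu, mul_one] at hmul_u
    exact hmul_u.symm
  · have hmul_v := hC.eqOn_convMul h (Set.eqOn_refl v C)
    rw [mul_assoc g, huv, mul_one] at hmul_v
    exact hmul_v.symm

end IsSubcoalgebra

end Subcoalgebra

section TensorSpan

variable {k M N P : Type*} [CommSemiring k] [AddCommMonoid M] [Module k M] [AddCommMonoid N]
  [Module k N] [AddCommMonoid P] [Module k P] {f g : M ⊗[k] N →ₗ[k] P}

theorem eqOn_range_mapIncl_iff {C : Submodule k M} {D : Submodule k N} :
    Set.EqOn f g (LinearMap.range (mapIncl C D)) ↔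
      ∀ a ∈ C, ∀ b ∈ D, f (a ⊗ₜ b) = g (a ⊗ₜ b) := by
  rw [range_mapIncl, Submodule.map₂_eq_span_image2, LinearMap.eqOn_span_iff]
  exact Set.forall_mem_image2

theorem eq_tmul_of_mem_span {S : Set M} {T : Set N}
    (h : ∀ s ∈ S, ∀ t ∈ T, f (s ⊗ₜ t) = g (s ⊗ₜ t)) :
    ∀ a ∈ Submodule.span k S, ∀ b ∈ Submodule.span k T, f (a ⊗ₜ b) = g (a ⊗ₜ b) := by
  intro a ha b hb
  have hab : a ⊗ₜ b ∈ Submodule.span k (Set.image2 (mk k M N · ·) S T) :=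
    Submodule.map₂_span_span k (mk k M N) S T ▸ Submodule.apply_mem_map₂ _ ha hb
  exact LinearMap.eqOn_span (Set.forall_mem_image2.mpr h) hab

end TensorSpan

section Pairing

variable {k B D E : Type*} [CommSemiring k] [AddCommMonoid D] [Module k D]

/-- The linear maps `D → E` induced by a pairing `ρ` of `B` and `D`: the tensor `b ⊗ e` acts as
`d ↦ ρ(b, d) e`. -/
noncomputable def pairingMap [AddCommMonoid B] [Module k B] [AddCommMonoid E] [Module k E]
    (ρ : B →ₗ[k] D →ₗ[k] k) : B ⊗[k] E →ₗ[k] D →ₗ[k] E :=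
  TensorProduct.lift (LinearMap.smulRightₗ ∘ₗ ρ)

@[simp]
theorem pairingMap_tmul [AddCommMonoid B] [Module k B] [AddCommMonoid E] [Module k E]
    (ρ : B →ₗ[k] D →ₗ[k] k) (b : B) (e : E) (d : D) : pairingMap ρ (b ⊗ₜ e) d = ρ b d • e := rfl

variable [Coalgebra k D] [Semiring B] [Algebra k B] [Semiring E] [Algebra k E]
  {ρ : B →ₗ[k] D →ₗ[k] k}

theorem pairingMap_mul
    (hρ : ∀ a b : B, toConv (ρ (a * b)) = toConv (ρ a) * toConv (ρ b)) (x y : B ⊗[k] E) :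
    toConv (pairingMap ρ (x * y)) = toConv (pairingMap ρ x) * toConv (pairingMap ρ y) := by
  induction x with
  | zero => simp
  | add x x' hx hx' => simp only [add_mul, map_add, toConv_add, hx, hx']
  | tmul b e =>
    induction y with
    | zero => simp
    | add y y' hy hy' => simp only [mul_add, map_add, toConv_add, hy, hy']
    | tmul b' e' =>
      ext d
      have h : ρ (b * b') d = (toConv (ρ b) * toConv (ρ b')) d :=
        congrArg (fun f : WithConv (D →ₗ[k] k) ↦ f d) (hρ b b')
      rw [(ℛ k d).convMul_apply] at h ⊢
      simp [h, Finset.sum_smul, smul_smul, mul_comm]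

theorem pairingMap_one (hρ : toConv (ρ 1) = 1) :
    toConv (pairingMap ρ (1 : B ⊗[k] E)) = 1 := by
  ext d
  have hd : ρ 1 d = counit d := congrArg (fun f : WithConv (D →ₗ[k] k) ↦ f d) hρ
  simp [Algebra.TensorProduct.one_def, hd, Algebra.algebraMap_eq_smul_one]

end Pairing

section Intertwining

variable {k B D : Type*} [CommRing k] [Ring B] [Bialgebra k B] [AddCommGroup D] [Module k D]
  [Coalgebra k D]

/-- The element `b` intertwines `j : D → B` on `C` with respect to a pairing `ρ` of `B` and `D` if
`ρ(b₍₁₎, d₍₁₎) b₍₂₎ j(d₍₂₎) = ρ(b₍₂₎, d₍₂₎) j(d₍₁₎) b₍₁₎` for all `d` in `C`. With `D = B` and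
`j = id` this says that `(b, d)` is `ρ`-commuting. -/
def IntertwinesOn (ρ : B →ₗ[k] D →ₗ[k] k) (j : D →ₗ[k] B) (C : Submodule k D) (b : B) : Prop :=
  Set.EqOn
    (toConv (pairingMap ρ (comul (R := k) b)) * toConv j : WithConv (D →ₗ[k] B))
    (toConv j * toConv (pairingMap ρ (TensorProduct.comm k B B (comul (R := k) b))) :
      WithConv (D →ₗ[k] B)) C

namespace IntertwinesOn

variable {ρ : B →ₗ[k] D →ₗ[k] k} {j : D →ₗ[k] B} {C : Submodule k D} {a b : B}

theorem one (hρ : toConv (ρ 1) = 1) : IntertwinesOn ρ j C 1 := by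
  have hcomm : TensorProduct.comm k B B 1 = 1 := map_one (Algebra.TensorProduct.comm k B B)
  rw [IntertwinesOn, Bialgebra.comul_one, hcomm, pairingMap_one hρ, one_mul, mul_one]
  exact Set.eqOn_refl _ _

theorem mul (hρ : ∀ a b : B, toConv (ρ (a * b)) = toConv (ρ a) * toConv (ρ b))
    (hC : IsSubcoalgebra C) (ha : IntertwinesOn ρ j C a) (hb : IntertwinesOn ρ j C b) :
    IntertwinesOn ρ j C (a * b) := by
  have hcomm (x y : B ⊗[k] B) : TensorProduct.comm k B B (x * y) =
      TensorProduct.comm k B B x * TensorProduct.comm k B B y :=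
    map_mul (Algebra.TensorProduct.comm k B B) x y
  rw [IntertwinesOn, Bialgebra.comul_mul, hcomm, pairingMap_mul hρ, pairingMap_mul hρ]
  have hright := hC.eqOn_convMul (Set.eqOn_refl (toConv (pairingMap ρ (comul a))) C) hb
  have hleft := hC.eqOn_convMul ha
    (Set.eqOn_refl (toConv (pairingMap ρ (TensorProduct.comm k B B (comul b)))) C)
  rw [← mul_assoc, ← mul_assoc] at hright
  rw [mul_assoc (toConv j)] at hleft
  exact hright.trans hleft

end IntertwinesOn

end Intertwining

section Opposite

variable {k A : Type*} [CommSemiring k] [Semiring A] [Bialgebra k A]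

theorem comul_eq_opAlgEquiv_symm (x : Aᵐᵒᵖ) :
    comul (R := k) x =
      (Algebra.TensorProduct.opAlgEquiv k k A A).symm (op (comul (R := k) x.unop)) := rfl

/-- The opposite bialgebra: opposite multiplication, same comultiplication. -/
noncomputable instance instBialgebraMulOpposite : Bialgebra k Aᵐᵒᵖ :=
  Bialgebra.mk' k Aᵐᵒᵖ
    (counit_one := by simp [MulOpposite.counit_def])
    (counit_mul := by simp [MulOpposite.counit_def, mul_comm])
    (comul_one := by simp [comul_eq_opAlgEquiv_symm])
    (comul_mul := by simp [comul_eq_opAlgEquiv_symm])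

end Opposite

section RCommuting

variable {k A : Type*} [CommRing k] [Ring A] [Bialgebra k A] {r rbar : A →ₗ[k] A →ₗ[k] k}

/-- The form `r` with its arguments exchanged, as a pairing of `Aᵐᵒᵖ` and `A`. Passing to `Aᵐᵒᵖ`
turns the antimultiplicativity of `r` in its second argument into multiplicativity. -/
noncomputable def opPairing (r : A →ₗ[k] A →ₗ[k] k) : Aᵐᵒᵖ →ₗ[k] A →ₗ[k] k :=
  r.flip ∘ₗ (opLinearEquiv k).symm.toLinearMap

@[simp]
theorem opPairing_apply (x : Aᵐᵒᵖ) (a : A) : opPairing r x a = r a x.unop := rfl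

theorem rComm_iff_sum {a b : A} {ι κ : Type*} (x : Coalgebra.Repr k a ι)
    (y : Coalgebra.Repr k b κ) :
    rComm r a b ↔
      ∑ j ∈ y.index, ∑ i ∈ x.index, r (x.left i) (y.left j) • (x.right i * y.right j) =
      ∑ j ∈ y.index, ∑ i ∈ x.index, r (x.right i) (y.right j) • (y.left j * x.left i) := by
  rw [rComm, ← x.eq, ← y.eq]
  simp [sum_tmul, tmul_sum]

theorem rComm_iff_formToAlg {a b : A} :
    rComm r a b ↔
      (formToAlg r * mulMap k A) (a ⊗ₜ[k] b) = (mulOpMap k A * formToAlg r) (a ⊗ₜ[k] b) := by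
  rw [rComm_iff_sum (ℛ k a) (ℛ k b), LinearMap.convMul_apply, LinearMap.convMul_apply,
    TensorProduct.comul_tmul, ← (ℛ k a).eq, ← (ℛ k b).eq]
  simp [sum_tmul, tmul_sum, formToAlg, mulMap, mulOpMap, Algebra.smul_def, Algebra.commutes]

theorem intertwinesOn_id_iff {C : Submodule k A} {a : A} :
    IntertwinesOn r LinearMap.id C a ↔ ∀ c ∈ C, rComm r a c := by
  refine forall₂_congr fun c _ ↦ ?_
  rw [rComm_iff_sum (ℛ k a) (ℛ k c), (ℛ k c).convMul_apply, (ℛ k c).convMul_apply, ← (ℛ k a).eq]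
  simp [Finset.sum_mul, Finset.mul_sum]

theorem intertwinesOn_op_iff {C : Submodule k A} {b : A} :
    IntertwinesOn (opPairing r) (opLinearEquiv k).toLinearMap C (op b) ↔
      ∀ a ∈ C, rComm r a b := by
  refine forall₂_congr fun a _ ↦ ?_
  have hb : comul (R := k) (op b) =
      ∑ i ∈ (ℛ k b).index, op ((ℛ k b).left i) ⊗ₜ[k] op ((ℛ k b).right i) := by
    rw [comul_eq_opAlgEquiv_symm, unop_op, ← (ℛ k b).eq]
    simp
  rw [rComm_iff_sum (ℛ k a) (ℛ k b), (ℛ k a).convMul_apply, (ℛ k a).convMul_apply, hb,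
    Finset.sum_comm, Finset.sum_comm (s := (ℛ k b).index), ← unop_injective.eq_iff]
  simp [Finset.sum_mul, Finset.mul_sum]

theorem rComm_one_left (hr : toConv (r 1) = 1) (c : A) : rComm r 1 c :=
  intertwinesOn_id_iff.mp (.one (C := ⊤) hr) c trivial

theorem rComm_one_right (hr : toConv (r.flip 1) = 1) (a : A) : rComm r a 1 :=
  intertwinesOn_op_iff.mp (.one (C := ⊤) hr) a trivial

theorem rComm_mul_left (hr : ∀ a b : A, toConv (r (a * b)) = toConv (r a) * toConv (r b))
    {C : Submodule k A} (hC : IsSubcoalgebra C) {a b : A}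
    (ha : ∀ c ∈ C, rComm r a c) (hb : ∀ c ∈ C, rComm r b c) : ∀ c ∈ C, rComm r (a * b) c :=
  intertwinesOn_id_iff.mp <|
    .mul hr hC (intertwinesOn_id_iff.mpr ha) (intertwinesOn_id_iff.mpr hb)

theorem rComm_mul_right
    (hr : ∀ b c : A, toConv (r.flip (b * c)) = toConv (r.flip c) * toConv (r.flip b))
    {C : Submodule k A} (hC : IsSubcoalgebra C) {b c : A}
    (hb : ∀ a ∈ C, rComm r a b) (hc : ∀ a ∈ C, rComm r a c) : ∀ a ∈ C, rComm r a (b * c) :=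
  intertwinesOn_op_iff.mp <| .mul (fun x y ↦ hr y.unop x.unop) hC
    (intertwinesOn_op_iff.mpr hc) (intertwinesOn_op_iff.mpr hb)

theorem rComm_of_mem_span {S T : Set A} (h : ∀ s ∈ S, ∀ t ∈ T, rComm r s t) :
    ∀ a ∈ Submodule.span k S, ∀ b ∈ Submodule.span k T, rComm r a b := by
  simp only [rComm_iff_formToAlg] at h ⊢
  exact eq_tmul_of_mem_span h

theorem rComm_of_mem_adjoin_left
    (hr : ∀ a b : A, toConv (r (a * b)) = toConv (r a) * toConv (r b))
    {C : Submodule k A} (hC : IsSubcoalgebra C) {S : Set A} (hone : ∀ c ∈ C, rComm r 1 c)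
    (hS : ∀ s ∈ S, ∀ c ∈ C, rComm r s c) : ∀ a ∈ Algebra.adjoin k S, ∀ c ∈ C, rComm r a c := by
  have hclosure : ∀ m ∈ Submonoid.closure S, ∀ c ∈ C, rComm r m c := fun m hm ↦
    Submonoid.closure_induction hS hone (fun _ _ _ _ ↦ rComm_mul_left hr hC) hm
  intro a ha c hc
  rw [← Subalgebra.mem_toSubmodule, Algebra.adjoin_eq_span] at ha
  exact rComm_of_mem_span hclosure a ha c (Submodule.subset_span hc)

theorem rComm_of_mem_adjoin_right
    (hr : ∀ b c : A, toConv (r.flip (b * c)) = toConv (r.flip c) * toConv (r.flip b))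
    {C : Submodule k A} (hC : IsSubcoalgebra C) {S : Set A} (hone : ∀ a ∈ C, rComm r a 1)
    (hS : ∀ s ∈ S, ∀ a ∈ C, rComm r a s) : ∀ b ∈ Algebra.adjoin k S, ∀ a ∈ C, rComm r a b := by
  have hclosure : ∀ m ∈ Submonoid.closure S, ∀ a ∈ C, rComm r a m := fun m hm ↦
    Submonoid.closure_induction hS hone (fun _ _ _ _ ↦ rComm_mul_right hr hC) hm
  intro b hb a ha
  rw [← Subalgebra.mem_toSubmodule, Algebra.adjoin_eq_span] at hb
  exact rComm_of_mem_span (fun a ha m hm ↦ hclosure m hm a ha) a (Submodule.subset_span ha) b hb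

theorem rComm_of_adjoin_eq_top
    (hmul_left : ∀ a b : A, toConv (r (a * b)) = toConv (r a) * toConv (r b))
    (hmul_right : ∀ b c : A, toConv (r.flip (b * c)) = toConv (r.flip c) * toConv (r.flip b))
    {S : Set A} (hS : Algebra.adjoin k S = ⊤)
    (hC : IsSubcoalgebra (Submodule.span k (insert 1 S)))
    (h : ∀ s ∈ insert 1 S, ∀ t ∈ insert 1 S, rComm r s t) (a b : A) : rComm r a b := by
  have hspan := rComm_of_mem_span h
  have hleft : ∀ a, ∀ c ∈ Submodule.span k (insert 1 S), rComm r a c := fun a ↦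
    rComm_of_mem_adjoin_left hmul_left hC (hspan 1 (Submodule.subset_span (.inl rfl)))
      (fun s hs ↦ hspan s (Submodule.subset_span (.inr hs))) a (hS ▸ Algebra.mem_top)
  exact rComm_of_mem_adjoin_right hmul_right isSubcoalgebra_top
    (fun a _ ↦ hleft a 1 (Submodule.subset_span (.inl rfl)))
    (fun s hs a _ ↦ hleft a s (Submodule.subset_span (.inr hs))) b (hS ▸ Algebra.mem_top) a trivial

theorem formToAlg_mul_eq_one {s : A →ₗ[k] A →ₗ[k] k}
    (h : toConv (TensorProduct.lift r) * toConv (TensorProduct.lift s) = 1) :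
    formToAlg r * formToAlg s = 1 := by
  have hcomp := LinearMap.algHom_comp_convMul_distrib (Algebra.ofId k A)
    (toConv (TensorProduct.lift r)) (toConv (TensorProduct.lift s))
  rw [h] at hcomp
  exact (ofConv_injective hcomp).symm

namespace IsConvInverse

theorem isUnit (h : IsConvInverse r rbar) : IsUnit (toConv (TensorProduct.lift r)) :=
  ⟨⟨_, _, h.1, h.2⟩, rfl⟩

theorem apply_one (h : IsConvInverse r rbar)
    (hr : IsIdempotentElem (toConv (r 1))) : toConv (r 1) = 1 := by
  let oneTmul : A →ₗc[k] A ⊗[k] A :=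
    (Coalgebra.TensorProduct.map (Bialgebra.unitBialgHom k A : k →ₗc[k] A) (.id k A)).comp
      (Coalgebra.TensorProduct.lid k A).symm
  have honeTmul : convPrecomp k oneTmul (toConv (TensorProduct.lift r)) = toConv (r 1) := by
    ext c
    simp [convPrecomp, oneTmul]
  exact (IsIdempotentElem.iff_eq_one_of_isUnit (honeTmul ▸ h.isUnit.map _)).mp hr

theorem flip_apply_one (h : IsConvInverse r rbar)
    (hr : IsIdempotentElem (toConv (r.flip 1))) : toConv (r.flip 1) = 1 := by
  let tmulOne : A →ₗc[k] A ⊗[k] A :=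
    (Coalgebra.TensorProduct.map (.id k A) (Bialgebra.unitBialgHom k A : k →ₗc[k] A)).comp
      (Coalgebra.TensorProduct.rid k k A).symm
  have htmulOne : convPrecomp k tmulOne (toConv (TensorProduct.lift r)) = toConv (r.flip 1) := by
    ext c
    simp [convPrecomp, tmulOne]
  exact (IsIdempotentElem.iff_eq_one_of_isUnit (htmulOne ▸ h.isUnit.map _)).mp hr

theorem mulOpMap_tmul_eq_iff_rComm (h : IsConvInverse r rbar) {C D : Submodule k A}
    (hC : IsSubcoalgebra C) (hD : IsSubcoalgebra D) :
    (∀ a ∈ C, ∀ b ∈ D, mulOpMap k A (a ⊗ₜ[k] b) =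
      (formToAlg r * mulMap k A * formToAlg rbar) (a ⊗ₜ[k] b)) ↔
      ∀ a ∈ C, ∀ b ∈ D, rComm r a b := by
  simp only [rComm_iff_formToAlg]
  exact eqOn_range_mapIncl_iff.symm.trans <| ((hC.range_mapIncl hD).eqOn_conj_iff
    (formToAlg_mul_eq_one h.1) (formToAlg_mul_eq_one h.2)).trans eqOn_range_mapIncl_iff

theorem mulOpMap_eq_iff_rComm (h : IsConvInverse r rbar) :
    mulOpMap k A = formToAlg r * mulMap k A * formToAlg rbar ↔ ∀ a b : A, rComm r a b := by
  have htop := h.mulOpMap_tmul_eq_iff_rComm isSubcoalgebra_top isSubcoalgebra_top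
  simp only [Submodule.mem_top, true_imp_iff] at htop
  exact ⟨fun hm ↦ htop.mp fun a b ↦ by rw [hm],
    fun hr ↦ ofConv_injective (TensorProduct.ext' (htop.mpr hr))⟩

theorem mulOpMap_one_tmul (h : IsConvInverse r rbar) (hr : toConv (r 1) = 1) (c : A) :
    mulOpMap k A (1 ⊗ₜ[k] c) = (formToAlg r * mulMap k A * formToAlg rbar) (1 ⊗ₜ[k] c) := by
  have hspan : ∀ a ∈ Submodule.span k {(1 : A)}, ∀ b ∈ (⊤ : Submodule k A), rComm r a b := by
    rw [← Submodule.span_univ]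
    refine rComm_of_mem_span ?_
    rintro _ rfl t -
    exact rComm_one_left hr t
  exact (h.mulOpMap_tmul_eq_iff_rComm (isSubcoalgebra_span_singleton .one) isSubcoalgebra_top).mpr
    hspan 1 (Submodule.mem_span_singleton_self 1) c trivial

theorem mulOpMap_tmul_one (h : IsConvInverse r rbar) (hr : toConv (r.flip 1) = 1) (c : A) :
    mulOpMap k A (c ⊗ₜ[k] 1) = (formToAlg r * mulMap k A * formToAlg rbar) (c ⊗ₜ[k] 1) := by
  have hspan : ∀ a ∈ (⊤ : Submodule k A), ∀ b ∈ Submodule.span k {(1 : A)}, rComm r a b := by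
    rw [← Submodule.span_univ]
    refine rComm_of_mem_span ?_
    rintro s - _ rfl
    exact rComm_one_right hr s
  exact (h.mulOpMap_tmul_eq_iff_rComm isSubcoalgebra_top (isSubcoalgebra_span_singleton .one)).mpr
    hspan c trivial 1 (Submodule.mem_span_singleton_self 1)

theorem rComm_of_mulOpMap_tmul_eq (h : IsConvInverse r rbar) (hr : toConv (r 1) = 1)
    (hr' : toConv (r.flip 1) = 1) {S : Set A}
    (hC : IsSubcoalgebra (Submodule.span k (insert 1 S)))
    (hS : ∀ s ∈ S, ∀ t ∈ S, mulOpMap k A (s ⊗ₜ[k] t) =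
      (formToAlg r * mulMap k A * formToAlg rbar) (s ⊗ₜ[k] t)) :
    ∀ s ∈ S, ∀ t ∈ S, rComm r s t := by
  have hinsert : ∀ s ∈ insert 1 S, ∀ t ∈ insert 1 S, mulOpMap k A (s ⊗ₜ[k] t) =
      (formToAlg r * mulMap k A * formToAlg rbar) (s ⊗ₜ[k] t) := by
    rintro s (rfl | hs) t (rfl | ht)
    exacts [h.mulOpMap_one_tmul hr 1, h.mulOpMap_one_tmul hr t, h.mulOpMap_tmul_one hr' s,
      hS s hs t ht]
  have hspan := (h.mulOpMap_tmul_eq_iff_rComm hC hC).mp (eq_tmul_of_mem_span hinsert)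
  exact fun s hs t ht ↦
    hspan s (Submodule.subset_span (.inr hs)) t (Submodule.subset_span (.inr ht))

end IsConvInverse

end RCommuting

/-- The two multiplicativity hypotheses say `r(ab, c) = r(a, c₍₁₎)r(b, c₍₂₎)` and
`r(a, bc) = r(a₍₁₎, c)r(a₍₂₎, b)`; products of `toConv` terms are convolution products. -/
theorem stmt12 {k A : Type*} [CommRing k] [Ring A] [Bialgebra k A]
    (r : A →ₗ[k] A →ₗ[k] k)
    (hmul1 : ∀ a b : A, toConv (r (a * b)) = toConv (r a) * toConv (r b))
    (hmul2 : ∀ b c : A, toConv (r.flip (b * c)) = toConv (r.flip c) * toConv (r.flip b)) :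
    (∀ C : Submodule k A, IsSubcoalgebra C → ∀ a b : A,
      (∀ c ∈ C, rComm r a c) → (∀ c ∈ C, rComm r b c) → ∀ c ∈ C, rComm r (a * b) c) ∧
    (∀ C : Submodule k A, IsSubcoalgebra C → ∀ b c : A,
      (∀ a ∈ C, rComm r a b) → (∀ a ∈ C, rComm r a c) → ∀ a ∈ C, rComm r a (b * c)) ∧
    (∀ S : Set A, Algebra.adjoin k S = ⊤ →
      IsSubcoalgebra (Submodule.span k (insert 1 S)) →
      ((∀ s ∈ insert 1 S, ∀ t ∈ insert 1 S, rComm r s t) → ∀ a b : A, rComm r a b) ∧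
      (∀ rbar : A →ₗ[k] A →ₗ[k] k, IsConvInverse r rbar →
        (mulOpMap k A = formToAlg r * mulMap k A * formToAlg rbar ↔
          ∀ a b : A, rComm r a b) ∧
        (mulOpMap k A = formToAlg r * mulMap k A * formToAlg rbar ↔
          ∀ s ∈ S, ∀ t ∈ S, rComm r s t) ∧
        (mulOpMap k A = formToAlg r * mulMap k A * formToAlg rbar ↔
          ∀ s ∈ S, ∀ t ∈ S, mulOpMap k A (s ⊗ₜ[k] t) =
            (formToAlg r * mulMap k A * formToAlg rbar) (s ⊗ₜ[k] t)))) := by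
  refine ⟨fun C hC a b ↦ rComm_mul_left hmul1 hC, fun C hC b c ↦ rComm_mul_right hmul2 hC,
    fun S hS hC ↦ ⟨rComm_of_adjoin_eq_top hmul1 hmul2 hS hC, fun rbar h ↦ ?_⟩⟩
  have hr : toConv (r 1) = 1 := h.apply_one (by simpa [IsIdempotentElem] using (hmul1 1 1).symm)
  have hr' : toConv (r.flip 1) = 1 :=
    h.flip_apply_one (by simpa [IsIdempotentElem] using (hmul2 1 1).symm)
  have rComm_all (hcomm : ∀ s ∈ S, ∀ t ∈ S, rComm r s t) : ∀ a b : A, rComm r a b := by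
    refine rComm_of_adjoin_eq_top hmul1 hmul2 hS hC ?_
    rintro s (rfl | hs) t (rfl | ht)
    exacts [rComm_one_left hr 1, rComm_one_left hr t, rComm_one_right hr' s, hcomm s hs t ht]
  have law_iff := h.mulOpMap_eq_iff_rComm
  exact ⟨law_iff,
    ⟨fun hm s _ t _ ↦ law_iff.mp hm s t, fun hcomm ↦ law_iff.mpr (rComm_all hcomm)⟩,
    ⟨fun hm s _ t _ ↦ by rw [← hm],
      fun hm ↦ law_iff.mpr (rComm_all (h.rComm_of_mulOpMap_tmul_eq hr hr' hC hm))⟩⟩
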